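/- Elliptic regularity estimates on the slab: (1) For i = 0, 1 and any vector field u ∈ H^{i+2}(Ω) satisfying the Navier boundary conditions u₃ = ∂₃u₁ = ∂₃u₂ = 0 on ∂Ω, it holds that ‖∇ⁱu‖₂ ≲ ‖∇ⁱu‖₀ + ‖Δ∇ⁱu‖₀. (2) For any scalar σ ∈ H³(Ω) with σ|_{∂Ω} = ∂₃²σ|_{∂Ω} = 0, it holds that ‖σ‖₃ ≲ ‖∇Δσ‖₀ and ‖∂_sσ‖₂ ≲ ‖∂_sΔσ‖₀ for s ∈ {1, 2, t} (when the corresponding derivative exists). -/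

import Mathlib

open MeasureTheory Set Filter Topology
open scoped ENNReal

noncomputable section

abbrev R3 : Type := Fin 3 → ℝ

/-- The slab Ω = ℝ² × (0, h). -/
def slab (hh : ℝ) : Set R3 := {x | x 2 ∈ Set.Ioo 0 hh}

/-- The boundary ∂Ω = ℝ² × {0, h}. -/
def bdry (hh : ℝ) : Set R3 := {x | x 2 = 0 ∨ x 2 = hh}

/-- `i`-th standard basis vector of ℝ³. -/
def unitv (i : Fin 3) : R3 := fun j => if j = i then 1 else 0

/-- spatial partial derivative ∂ᵢ -/
def pd (i : Fin 3) (f : R3 → ℝ) : R3 → ℝ := fun x => fderiv ℝ f x (unitv i)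

/-- iterated spatial partial derivatives -/
def pdL : List (Fin 3) → (R3 → ℝ) → R3 → ℝ
  | [], f => f
  | i :: l, f => pd i (pdL l f)

/-- Laplacian -/
def lap (f : R3 → ℝ) : R3 → ℝ := fun x => ∑ i : Fin 3, pd i (pd i f) x

/-- horizontal Laplacian Δ_h -/
def laph (f : R3 → ℝ) : R3 → ℝ := fun x => pd 0 (pd 0 f) x + pd 1 (pd 1 f) x

/-- time derivative -/
def dt (f : ℝ → R3 → ℝ) : ℝ → R3 → ℝ := fun t x => deriv (fun s => f s x) t

/-- `j`-th component of a time dependent vector field -/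
def uc (u : ℝ → R3 → Fin 3 → ℝ) (j : Fin 3) : ℝ → R3 → ℝ := fun t x => u t x j

/-- squared L²(Ω) norm -/
def L2sq (hh : ℝ) (f : R3 → ℝ) : ℝ := ∫ x in slab hh, (f x) ^ 2

/-- squared Hᵏ(Ω) norm -/
def HSq (hh : ℝ) (k : ℕ) (f : R3 → ℝ) : ℝ :=
  ∑ n ∈ Finset.range (k + 1), ∑ α : Fin n → Fin 3, L2sq hh (pdL (List.ofFn α) f)

/-- Hᵏ(Ω) norm -/
def Hnorm (hh : ℝ) (k : ℕ) (f : R3 → ℝ) : ℝ := Real.sqrt (HSq hh k f)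

/-- squared Hᵏ(Ω) norm of a vector field -/
def VHSq (hh : ℝ) (k : ℕ) (w : R3 → Fin 3 → ℝ) : ℝ := ∑ j : Fin 3, HSq hh k (fun x => w x j)

def VHnorm (hh : ℝ) (k : ℕ) (w : R3 → Fin 3 → ℝ) : ℝ := Real.sqrt (VHSq hh k w)

/-- squared ‖∇w‖ₖ² -/
def GradSq (hh : ℝ) (k : ℕ) (w : R3 → Fin 3 → ℝ) : ℝ :=
  ∑ i : Fin 3, ∑ j : Fin 3, HSq hh k (pd i (fun x => w x j))

def GradNorm (hh : ℝ) (k : ℕ) (w : R3 → Fin 3 → ℝ) : ℝ := Real.sqrt (GradSq hh k w)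

/-- iterate of a single partial derivative -/
def pdIter (i : Fin 3) : ℕ → (R3 → ℝ) → R3 → ℝ
  | 0, f => f
  | n + 1, f => pd i (pdIter i n f)

/-- anisotropic norm ‖f‖_{i,l} = ∑_{α₁+α₂=i} ‖∂₁^{α₁}∂₂^{α₂} f‖_{H^l} -/
def anisoNorm (hh : ℝ) (i l : ℕ) (f : R3 → ℝ) : ℝ :=
  ∑ a ∈ Finset.range (i + 1), Hnorm hh l (pdIter 0 a (pdIter 1 (i - a) f))

/-- equilibrium density ρ̄(x) = x₃ + 1 -/
def rbar : R3 → ℝ := fun x => x 2 + 1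

/-- perturbed density ρ = ρ̄ + κ⁻¹ σ -/
def rho (κ : ℝ) (σ : R3 → ℝ) : R3 → ℝ := fun x => rbar x + κ⁻¹ * σ x

/-- The scaled perturbed incompressible NSK system at time `t` on the slab:
    σ_t + u·∇σ + κu₃ = 0,  ρ(u_t + u·∇u) + ∇β = μΔu − Δσ(κe³ + ∇σ),  div u = 0. -/
def NSK (hh μ κ : ℝ) (σ : ℝ → R3 → ℝ) (u : ℝ → R3 → Fin 3 → ℝ) (β : ℝ → R3 → ℝ)
    (t : ℝ) : Prop :=
  ∀ x ∈ slab hh,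
    (dt σ t x + (∑ i : Fin 3, u t x i * pd i (σ t) x) + κ * u t x 2 = 0) ∧
    (∀ j : Fin 3,
      rho κ (σ t) x *
          (dt (uc u j) t x + ∑ i : Fin 3, u t x i * pd i (fun y => u t y j) x)
        + pd j (β t) x
      = μ * lap (fun y => u t y j) x
        - lap (σ t) x * ((if j = 2 then κ else 0) + pd j (σ t) x)) ∧
    (∑ i : Fin 3, pd i (fun y => u t y i) x = 0)

/-- Navier(-slip) boundary conditions at time `t`. -/
def NavierBC (hh : ℝ) (u : ℝ → R3 → Fin 3 → ℝ) (t : ℝ) : Prop :=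
  ∀ x ∈ bdry hh,
    u t x 2 = 0 ∧ pd 2 (fun y => u t y 0) x = 0 ∧ pd 2 (fun y => u t y 1) x = 0

/-- "sufficiently regular" time dependent scalar field: jointly smooth with all
    spatial derivatives (and their time derivatives) square integrable on the slab. -/
def SReg (hh : ℝ) (f : ℝ → R3 → ℝ) : Prop :=
  ContDiff ℝ (⊤ : ℕ∞) (Function.uncurry f) ∧
  ∀ (t : ℝ) (l : List (Fin 3)),
    IntegrableOn (fun x => (pdL l (f t) x) ^ 2) (slab hh) volume ∧
    IntegrableOn (fun x => (pdL l (dt f t) x) ^ 2) (slab hh) volume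

/-- "sufficiently regular" time dependent vector field -/
def VReg (hh : ℝ) (u : ℝ → R3 → Fin 3 → ℝ) : Prop := ∀ j : Fin 3, SReg hh (uc u j)

/-- regular (time independent) data with square integrable derivatives -/
def DReg (hh : ℝ) (f : R3 → ℝ) : Prop :=
  ContDiff ℝ (⊤ : ℕ∞) f ∧ ∀ l : List (Fin 3), IntegrableOn (fun x => (pdL l f x) ^ 2) (slab hh) volume

/-- boundary conditions defining H³_ρ̄ (note ρ̄' = 1) -/
def BCh3 (hh κ : ℝ) (f : R3 → ℝ) : Prop :=
  ∀ x ∈ bdry hh, f x = 0 ∧ pd 2 (pd 2 f) x = 0 ∧ pd 2 f x = -κ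

/-- divergence-free and boundary conditions defining ℋ²ₛ -/
def BCh2s (hh : ℝ) (w : R3 → Fin 3 → ℝ) : Prop :=
  (∀ x ∈ slab hh, ∑ i : Fin 3, pd i (fun y => w y i) x = 0) ∧
  (∀ x ∈ bdry hh, w x 2 = 0 ∧ pd 2 (fun y => w y 0) x = 0 ∧ pd 2 (fun y => w y 1) x = 0)

/-- continuity in time with values in Hᵏ(Ω) -/
def ContH (hh : ℝ) (k : ℕ) (S : Set ℝ) (f : ℝ → R3 → ℝ) : Prop :=
  ∀ t₀ ∈ S,
    Tendsto (fun t => Hnorm hh k (fun x => f t x - f t₀ x)) (nhdsWithin t₀ S) (𝓝 0)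

/-- membership in L²(0,T;Hᵏ) -/
def L2H (hh : ℝ) (k : ℕ) (T : ℝ) (f : ℝ → R3 → ℝ) : Prop :=
  IntegrableOn (fun t => HSq hh k (f t)) (Set.Ioo 0 T) volume

/-- membership in 𝔓_T -/
def memP (hh κ T : ℝ) (σ : ℝ → R3 → ℝ) : Prop :=
  (∀ t ∈ Set.Icc (0:ℝ) T,
    (∀ l : List (Fin 3), l.length ≤ 3 →
      IntegrableOn (fun x => (pdL l (σ t) x) ^ 2) (slab hh) volume) ∧
    BCh3 hh κ (σ t)) ∧
  ContH hh 3 (Set.Icc 0 T) σ ∧ ContH hh 1 (Set.Icc 0 T) (dt σ) ∧ L2H hh 2 T (dt σ)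

/-- membership in 𝒱_T -/
def memV (hh T : ℝ) (u : ℝ → R3 → Fin 3 → ℝ) : Prop :=
  (∀ t ∈ Set.Icc (0:ℝ) T,
    (∀ (j : Fin 3) (l : List (Fin 3)), l.length ≤ 3 →
      IntegrableOn (fun x => (pdL l (fun y => u t y j) x) ^ 2) (slab hh) volume) ∧
    BCh2s hh (u t)) ∧
  (∀ j : Fin 3, ContH hh 2 (Set.Icc 0 T) (uc u j)) ∧
  (∀ j : Fin 3, L2H hh 3 T (uc u j)) ∧
  (∀ j : Fin 3, ContH hh 0 (Set.Icc 0 T) (dt (uc u j))) ∧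
  (∀ j : Fin 3, L2H hh 1 T (dt (uc u j)))

/-- the energy functional E(t) -/
def Efun (hh κ : ℝ) (σ : ℝ → R3 → ℝ) (u : ℝ → R3 → Fin 3 → ℝ) (t : ℝ) : ℝ :=
  HSq hh 3 (σ t) + VHSq hh 2 (u t) + κ ^ 2 * HSq hh 1 (fun x => u t x 2)
    + κ ^ 2 * (L2sq hh (laph (σ t)) + L2sq hh (pd 0 (pd 2 (σ t)))
        + L2sq hh (pd 1 (pd 2 (σ t))))

/-- E⁰, the energy functional evaluated on initial data -/
def E0fun (hh κ : ℝ) (σ0 : R3 → ℝ) (u0 : R3 → Fin 3 → ℝ) : ℝ :=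
  HSq hh 3 σ0 + VHSq hh 2 u0 + κ ^ 2 * HSq hh 1 (fun x => u0 x 2)
    + κ ^ 2 * (L2sq hh (laph σ0) + L2sq hh (pd 0 (pd 2 σ0)) + L2sq hh (pd 1 (pd 2 σ0)))

/-- the functional ℰ(t) -/
def EE (hh κ : ℝ) (σ : ℝ → R3 → ℝ) (u : ℝ → R3 → Fin 3 → ℝ) (t : ℝ) : ℝ :=
  HSq hh 1 (dt σ t) + (∑ j : Fin 3, L2sq hh (dt (uc u j) t)) + Efun hh κ σ u t

/-- the dissipation functional 𝒟(t) -/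
def DD (hh : ℝ) (σ : ℝ → R3 → ℝ) (u : ℝ → R3 → Fin 3 → ℝ) (t : ℝ) : ℝ :=
  (anisoNorm hh 1 2 (σ t)) ^ 2 + HSq hh 2 (dt σ t) + GradSq hh 2 (u t)
    + ∑ j : Fin 3, HSq hh 1 (dt (uc u j) t)

/-- ‖u_t‖ₖ -/
def utNorm (hh : ℝ) (k : ℕ) (u : ℝ → R3 → Fin 3 → ℝ) (t : ℝ) : ℝ :=
  Real.sqrt (∑ j : Fin 3, HSq hh k (dt (uc u j) t))

/-- embedding of the horizontal indices into Fin 3 -/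
def hi (a : Fin 2) : Fin 3 := ⟨a.1, by omega⟩

/-- good initial data: (σ⁰,u⁰) ∈ H³_ρ̄ × ℋ²ₛ, no vacuum, and smallness of E⁰ -/
def GoodData (hh κ d c₁ c₂ : ℝ) (σ0 : R3 → ℝ) (u0 : R3 → Fin 3 → ℝ) : Prop :=
  DReg hh σ0 ∧ (∀ j : Fin 3, DReg hh (fun x => u0 x j)) ∧
  BCh3 hh κ σ0 ∧ BCh2s hh u0 ∧
  (∀ x ∈ slab hh, d ≤ rbar x + κ⁻¹ * σ0 x) ∧
  E0fun hh κ σ0 u0 ≤ ((3 * c₁ * (max κ⁻¹ c₂) ^ 9)⁻¹) ^ 3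

/-- (σ,u,∇β) is a global strong solution with data (σ⁰,u⁰):
    initial condition, equations and boundary conditions for positive times, and
    (σ,u,∇β) ∈ 𝔓_T × 𝒱_T × C⁰([0,T],L²) for every T > 0. -/
def GlobalSol (hh μ κ : ℝ) (σ0 : R3 → ℝ) (u0 : R3 → Fin 3 → ℝ)
    (σ : ℝ → R3 → ℝ) (u : ℝ → R3 → Fin 3 → ℝ) (β : ℝ → R3 → ℝ) : Prop :=
  (∀ x ∈ slab hh, σ 0 x = σ0 x ∧ ∀ j : Fin 3, u 0 x j = u0 x j) ∧
  (∀ t : ℝ, 0 < t → NSK hh μ κ σ u β t ∧ NavierBC hh u t) ∧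
  (∀ T : ℝ, 0 < T → memP hh κ T σ ∧ memV hh T u ∧
    ∀ j : Fin 3, ContH hh 0 (Set.Icc 0 T) (fun t => pd j (β t)))

end

/-!
Suppose that on each face of the slab `w` satisfies the Dirichlet or the Neumann condition.
Integrating by parts twice, with one derivative horizontal whenever the two differ, gives
`∑ᵢⱼ ‖∂ᵢ∂ⱼw‖² = ‖Δw‖²`, and integrating once gives `‖∇w‖² = -∫ w Δw`; together they bound the
`H²` norm by `‖w‖ + ‖Δw‖`. The horizontal derivatives of `w` inherit its boundary conditions. The
vertical derivative `v = ∂₃w` need not satisfy any, but its second derivatives other than `∂₃²v`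
are derivatives of `∂₁w` and `∂₂w`, while `∂₃²v = Δv - ∂₁²v - ∂₂²v`, and interpolation on vertical
lines bounds `∂₃v` by `v` and `∂₃²v`.

For `σ = 0` on the boundary, the Poincaré inequality on vertical lines absorbs the lower-order term.
If also `∂₃²σ = 0` there, then `∂₃σ` is a Neumann function and `Δσ` vanishes on the boundary, so
that the Poincaré inequality applies to `Δσ` as well.
-/

section IntegrationByParts

variable {E : Type*} [NormedAddCommGroup E] [NormedSpace ℝ E]

lemma hasLineDerivAt_indicator {s : Set E} {v x : E} (hs : ∀ x (t : ℝ), x + t • v ∈ s ↔ x ∈ s)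
    {f : E → ℝ} {f' : ℝ} (hf : HasLineDerivAt ℝ f f' x v) :
    HasLineDerivAt ℝ (s.indicator f) (s.indicator (fun _ => f') x) x v := by
  by_cases hx : x ∈ s
  · simpa [HasLineDerivAt, indicator, hs, hx] using hf
  · simpa [HasLineDerivAt, indicator, hs, hx] using hasDerivAt_const (0 : ℝ) (0 : ℝ)

lemma setIntegral_mul_fderiv_eq_neg_fderiv_mul [FiniteDimensional ℝ E] [MeasurableSpace E]
    [BorelSpace E] {μ : Measure E} [μ.IsAddHaarMeasure] {s : Set E} (hsm : MeasurableSet s) {v : E}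
    (hs : ∀ x (t : ℝ), x + t • v ∈ s ↔ x ∈ s) {f g : E → ℝ}
    (hf : Differentiable ℝ f) (hg : Differentiable ℝ g)
    (hf'g : IntegrableOn (fun x => fderiv ℝ f x v * g x) s μ)
    (hfg' : IntegrableOn (fun x => f x * fderiv ℝ g x v) s μ)
    (hfg : IntegrableOn (fun x => f x * g x) s μ) :
    ∫ x in s, f x * fderiv ℝ g x v ∂μ = -∫ x in s, fderiv ℝ f x v * g x ∂μ := by
  have indicator_mul : ∀ u w : E → ℝ,
      s.indicator (fun x => u x * w x) = fun x => s.indicator u x * w x :=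
    fun u w => funext fun x => indicator_mul_left ..
  rw [← integrable_indicator_iff hsm, indicator_mul] at hf'g hfg' hfg
  rw [← integral_indicator hsm, ← integral_indicator hsm, indicator_mul f,
    indicator_mul (fun x => fderiv ℝ f x v)]
  exact integral_bilinear_hasLineDerivAt_right_eq_neg_left_of_integrable (v := v)
    (B := ContinuousLinearMap.mul ℝ ℝ) hf'g hfg' hfg
    (fun x _ => hasLineDerivAt_indicator hs ((hf x).hasFDerivAt.hasLineDerivAt v))
    (fun x _ => (hg x).hasFDerivAt.hasLineDerivAt v)

lemma fderiv_fderiv_apply_comm {f : E → ℝ} (hf : ContDiff ℝ 2 f) (v w x : E) :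
    fderiv ℝ (fun y => fderiv ℝ f y v) x w = fderiv ℝ (fun y => fderiv ℝ f y w) x v := by
  have hd : DifferentiableAt ℝ (fderiv ℝ f) x :=
    (hf.fderiv_right (m := 1) le_rfl).differentiable one_ne_zero x
  have hsymm : IsSymmSndFDerivAt ℝ f x := hf.contDiffAt.isSymmSndFDerivAt (by simp)
  simpa [fderiv_clm_apply hd (differentiableAt_const _)] using hsymm w v

end IntegrationByParts

section Interval

variable {a b : ℝ}

/-- The constant of the interpolation inequality `∫ f'² ≤ C (∫ f² + ∫ f''²)` on an interval of
length `L`. -/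
noncomputable def interpolationConst (L : ℝ) : ℝ := 8 * L ^ 2 + 72 / L ^ 2 + 3

lemma interpolationConst_pos (L : ℝ) : 0 < interpolationConst L := by
  unfold interpolationConst
  positivity

lemma intervalIntegral_le_of_le_deriv_add (hab : a ≤ b) {F F' p q : ℝ → ℝ}
    (hF : ∀ t ∈ Icc a b, HasDerivAt F (F' t) t) (hF' : ContinuousOn F' (Icc a b))
    (hFab : F a = F b) (hp : ContinuousOn p (Icc a b)) (hq : ContinuousOn q (Icc a b))
    (hle : ∀ t ∈ Icc a b, p t ≤ F' t + q t) :
    ∫ t in a..b, p t ≤ ∫ t in a..b, q t := by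
  have hF'_int : ∫ t in a..b, F' t = 0 := by
    rw [intervalIntegral.integral_eq_sub_of_hasDerivAt (by rwa [uIcc_of_le hab])
      (hF'.intervalIntegrable_of_Icc hab), hFab, sub_self]
  calc ∫ t in a..b, p t ≤ ∫ t in a..b, (F' t + q t) :=
        intervalIntegral.integral_mono_on hab (hp.intervalIntegrable_of_Icc hab)
          ((hF'.add hq).intervalIntegrable_of_Icc hab) hle
    _ = ∫ t in a..b, q t := by
        rw [intervalIntegral.integral_add (hF'.intervalIntegrable_of_Icc hab)
          (hq.intervalIntegrable_of_Icc hab), hF'_int, zero_add]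

lemma intervalIntegral_sq_le_of_eq_zero_left (hab : a ≤ b) {f f' : ℝ → ℝ}
    (hf : ∀ t ∈ Icc a b, HasDerivAt f (f' t) t) (hf' : ContinuousOn f' (Icc a b))
    (hfa : f a = 0) :
    ∫ t in a..b, f t ^ 2 ≤ 4 * (b - a) ^ 2 * ∫ t in a..b, f' t ^ 2 := by
  have hfc : ContinuousOn f (Icc a b) := fun t ht => (hf t ht).continuousAt.continuousWithinAt
  rw [← intervalIntegral.integral_const_mul]
  refine intervalIntegral_le_of_le_deriv_add hab (F := fun t => 2 * ((t - b) * f t ^ 2))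
    (F' := fun t => 2 * (f t ^ 2 + (t - b) * (2 * f t * f' t))) (fun t ht => ?_)
    (by fun_prop) (by simp [hfa]) (by fun_prop) (by fun_prop) (fun t ht => ?_)
  · exact ((((hasDerivAt_id t).sub_const b).mul ((hf t ht).pow 2)).const_mul 2).congr_deriv
      (by simp)
  · have hweight : (t - b) ^ 2 ≤ (b - a) ^ 2 := by nlinarith [ht.1, ht.2]
    linarith [sq_nonneg (f t + 2 * (t - b) * f' t),
      mul_le_mul_of_nonneg_right hweight (sq_nonneg (f' t))]

lemma sq_le_interpolationConst_mul {L p r r' : ℝ} (hp : p ^ 2 ≤ L ^ 2) (hr : r ^ 2 ≤ 3)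
    (hr' : r' ^ 2 ≤ 36 / L ^ 2) (x y z : ℝ) :
    y ^ 2 ≤ 2 * (y ^ 2 + 2 * p * (y * z) + r' * (x * y) + r * (x * z)) +
      interpolationConst L * (x ^ 2 + z ^ 2) := by
  have hL : 0 ≤ 36 / L ^ 2 := by positivity
  have hconst : interpolationConst L = 8 * L ^ 2 + 2 * (36 / L ^ 2) + 3 := by
    unfold interpolationConst
    ring
  rw [hconst]
  linarith [sq_nonneg (y + 4 * p * z), sq_nonneg (y + 2 * r' * x), sq_nonneg (x + r * z),
    mul_le_mul_of_nonneg_right hp (sq_nonneg z), mul_le_mul_of_nonneg_right hr (sq_nonneg z),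
    mul_le_mul_of_nonneg_right hr' (sq_nonneg x), mul_nonneg (sq_nonneg L) (sq_nonneg x),
    mul_nonneg hL (sq_nonneg z), sq_nonneg x, sq_nonneg z]

lemma exists_interpolation_multipliers (hab : a < b) :
    ∃ p r r' : ℝ → ℝ, (∀ t, HasDerivAt p (1 - r t) t) ∧ (∀ t, HasDerivAt r (r' t) t) ∧
      Continuous r' ∧ (p a = 0 ∧ p b = 0) ∧ (r a = 0 ∧ r b = 0) ∧
      ∀ t ∈ Icc a b, p t ^ 2 ≤ (b - a) ^ 2 ∧ r t ^ 2 ≤ 3 ∧ r' t ^ 2 ≤ 36 / (b - a) ^ 2 := by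
  set L := b - a with hL_def
  have hL : 0 < L := sub_pos.2 hab
  let θ : ℝ → ℝ := fun t => (t - a) / L
  have hθ (t : ℝ) : HasDerivAt θ (1 / L) t := ((hasDerivAt_id t).sub_const a).div_const L
  have hθa : θ a = 0 := by simp [θ]
  have hθb : θ b = 1 := by simp [θ, ← hL_def, hL.ne']
  refine ⟨fun t => L * (θ t * (1 - θ t) * (1 - 2 * θ t)), fun t => 6 * (θ t * (1 - θ t)),
    fun t => 6 * (1 - 2 * θ t) / L, fun t => ?_, fun t => ?_, by fun_prop,
    by simp [hθa, hθb], by simp [hθa, hθb], fun t ht => ?_⟩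
  · exact ((((hθ t).mul ((hθ t).const_sub 1)).mul (((hθ t).const_mul 2).const_sub 1)).const_mul
      L).congr_deriv (by simp only [Pi.mul_apply]; field_simp; ring)
  · exact (((hθ t).mul ((hθ t).const_sub 1)).const_mul 6).congr_deriv (by ring)
  · have hθ0 : 0 ≤ θ t := div_nonneg (sub_nonneg.2 ht.1) hL.le
    have hθ1 : θ t ≤ 1 := (div_le_one hL).2 (sub_le_sub_right ht.2 a)
    have hq0 : 0 ≤ θ t * (1 - θ t) := mul_nonneg hθ0 (sub_nonneg.2 hθ1)
    have hq : θ t * (1 - θ t) ≤ 1 / 4 := by linarith [sq_nonneg (1 - 2 * θ t)]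
    have hq_sq : (θ t * (1 - θ t)) ^ 2 ≤ 1 / 16 := by nlinarith
    have hodd_sq : (1 - 2 * θ t) ^ 2 ≤ 1 := by linarith
    refine ⟨?_, by linarith [mul_pow 6 (θ t * (1 - θ t)) 2], ?_⟩
    · rw [mul_pow, mul_pow (θ t * (1 - θ t))]
      exact mul_le_of_le_one_right (sq_nonneg L)
        (mul_le_one₀ (hq_sq.trans (by norm_num)) (sq_nonneg _) hodd_sq)
    · rw [div_pow, mul_pow]
      gcongr
      linarith

lemma intervalIntegral_deriv_sq_le (hab : a < b) {f f' f'' : ℝ → ℝ}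
    (hf : ∀ t ∈ Icc a b, HasDerivAt f (f' t) t) (hf' : ∀ t ∈ Icc a b, HasDerivAt f' (f'' t) t)
    (hf'' : ContinuousOn f'' (Icc a b)) :
    ∫ t in a..b, f' t ^ 2 ≤
      interpolationConst (b - a) * ∫ t in a..b, (f t ^ 2 + f'' t ^ 2) := by
  have hfc : ContinuousOn f (Icc a b) := fun t ht => (hf t ht).continuousAt.continuousWithinAt
  have hfc' : ContinuousOn f' (Icc a b) := fun t ht => (hf' t ht).continuousAt.continuousWithinAt
  obtain ⟨p, r, r', hp, hr, hr'c, ⟨hpa, hpb⟩, ⟨hra, hrb⟩, hbound⟩ :=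
    exists_interpolation_multipliers hab
  have hpc : Continuous p := continuous_iff_continuousAt.2 fun t => (hp t).continuousAt
  have hrc : Continuous r := continuous_iff_continuousAt.2 fun t => (hr t).continuousAt
  rw [← intervalIntegral.integral_const_mul]
  -- Since `p' + r = 1`, the derivative of `p f'² + r f f'` is `f'²` plus terms containing a
  -- factor `f` or `f''`, and it integrates to zero.
  refine intervalIntegral_le_of_le_deriv_add hab.le
    (F := fun t => 2 * (p t * f' t ^ 2 + r t * (f t * f' t)))
    (F' := fun t => 2 * (f' t ^ 2 + 2 * p t * (f' t * f'' t) + r' t * (f t * f' t) +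
      r t * (f t * f'' t)))
    (fun t ht => ?_) (by fun_prop) (by simp [hpa, hpb, hra, hrb]) (by fun_prop)
    (by fun_prop) (fun t ht => ?_)
  · exact ((((hp t).mul ((hf' t ht).pow 2)).add
      ((hr t).mul ((hf t ht).mul (hf' t ht)))).const_mul 2).congr_deriv
        (by simp only [Pi.mul_apply, Pi.pow_apply]; push_cast; ring)
  · obtain ⟨hp_sq, hr_sq, hr'_sq⟩ := hbound t ht
    exact sq_le_interpolationConst_mul hp_sq hr_sq hr'_sq _ _ _

end Interval

section PartialDerivatives

variable {f : R3 → ℝ}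

lemma contDiff_pd (hf : ContDiff ℝ (⊤ : ℕ∞) f) (i : Fin 3) : ContDiff ℝ (⊤ : ℕ∞) (pd i f) :=
  (hf.fderiv_right (m := (⊤ : ℕ∞)) (by simp)).clm_apply contDiff_const

lemma contDiff_pdL (hf : ContDiff ℝ (⊤ : ℕ∞) f) (l : List (Fin 3)) :
    ContDiff ℝ (⊤ : ℕ∞) (pdL l f) := by
  induction l with
  | nil => exact hf
  | cons i l ih => exact contDiff_pd ih i

lemma pd_comm (hf : ContDiff ℝ 2 f) (i j : Fin 3) : pd i (pd j f) = pd j (pd i f) :=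
  funext fun x => fderiv_fderiv_apply_comm hf (unitv j) (unitv i) x

lemma pd_sum {ι : Type*} {s : Finset ι} {F : ι → R3 → ℝ} (hF : ∀ k ∈ s, Differentiable ℝ (F k))
    (i : Fin 3) : pd i (fun x => ∑ k ∈ s, F k x) = fun x => ∑ k ∈ s, pd i (F k) x := by
  funext x
  simp [pd, fderiv_fun_sum fun k hk => hF k hk x]

lemma pdL_sum {ι : Type*} {s : Finset ι} {F : ι → R3 → ℝ}
    (hF : ∀ k ∈ s, ContDiff ℝ (⊤ : ℕ∞) (F k)) (l : List (Fin 3)) :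
    pdL l (fun x => ∑ k ∈ s, F k x) = fun x => ∑ k ∈ s, pdL l (F k) x := by
  induction l with
  | nil => rfl
  | cons i l ih =>
    simp only [pdL, ih]
    exact pd_sum (fun k hk => (contDiff_pdL (hF k hk) l).differentiable (by simp)) i

lemma pdL_pd (l : List (Fin 3)) (i : Fin 3) (f : R3 → ℝ) : pdL l (pd i f) = pdL (l ++ [i]) f := by
  induction l with
  | nil => rfl
  | cons j l ih => simp [pdL, ih]

lemma pd_lap (hf : ContDiff ℝ (⊤ : ℕ∞) f) (i : Fin 3) : pd i (lap f) = lap (pd i f) := by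
  have htwo (k : Fin 3) : ContDiff ℝ 2 (pd k f) := contDiff_infty.1 (contDiff_pd hf k) 2
  have hcomm (k : Fin 3) : pd i (pd k (pd k f)) = pd k (pd k (pd i f)) := by
    rw [pd_comm (htwo k), pd_comm (contDiff_infty.1 hf 2) i]
  unfold lap
  rw [pd_sum fun k _ => (contDiff_pd (contDiff_pd hf k) k).differentiable (by simp)]
  simp only [hcomm]

lemma pd_eq_zero_of_forall_mem_eq_zero {S : Set R3} {i : Fin 3}
    (hS : ∀ x ∈ S, ∀ t : ℝ, x + t • unitv i ∈ S) (hf : Differentiable ℝ f)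
    (h0 : ∀ x ∈ S, f x = 0) : ∀ x ∈ S, pd i f x = 0 := by
  intro x hx
  have hconst : HasLineDerivAt ℝ f 0 x (unitv i) := by
    simpa [HasLineDerivAt, h0 _ (hS x hx _)] using hasDerivAt_const (0 : ℝ) (0 : ℝ)
  exact ((hf x).hasFDerivAt.hasLineDerivAt (unitv i)).unique hconst

lemma add_smul_unitv_apply_two {i : Fin 3} (hi : i ≠ 2) (x : R3) (t : ℝ) :
    (x + t • unitv i) 2 = x 2 := by
  simp [unitv, hi.symm]

end PartialDerivatives

section SquareIntegrable

variable {hh : ℝ} {f g : R3 → ℝ}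

protected lemma DReg.contDiff (hf : DReg hh f) : ContDiff ℝ 2 f :=
  contDiff_infty.1 hf.1 2

protected lemma DReg.differentiable (hf : DReg hh f) : Differentiable ℝ f :=
  hf.1.differentiable (by simp)

lemma DReg.memLp_pdL (hf : DReg hh f) (l : List (Fin 3)) :
    MemLp (pdL l f) 2 (volume.restrict (slab hh)) :=
  (memLp_two_iff_integrable_sq (contDiff_pdL hf.1 l).continuous.aestronglyMeasurable).2 (hf.2 l)

protected lemma DReg.memLp (hf : DReg hh f) : MemLp f 2 (volume.restrict (slab hh)) :=
  hf.memLp_pdL []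

lemma DReg.integrableOn_sq (hf : DReg hh f) : IntegrableOn (fun x => f x ^ 2) (slab hh) :=
  hf.2 []

lemma DReg.integrableOn_mul (hf : DReg hh f) (hg : DReg hh g) :
    IntegrableOn (fun x => f x * g x) (slab hh) :=
  hf.memLp.integrable_mul hg.memLp

protected lemma DReg.pd (hf : DReg hh f) (i : Fin 3) : DReg hh (pd i f) :=
  ⟨contDiff_pd hf.1 i, fun l => pdL_pd l i f ▸ hf.2 _⟩

protected lemma DReg.sum {ι : Type*} {s : Finset ι} {F : ι → R3 → ℝ}
    (hF : ∀ k ∈ s, DReg hh (F k)) : DReg hh (fun x => ∑ k ∈ s, F k x) := by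
  refine ⟨ContDiff.sum fun k hk => (hF k hk).1, fun l => ?_⟩
  rw [pdL_sum fun k hk => (hF k hk).1]
  exact (memLp_finsetSum s fun k hk => (hF k hk).memLp_pdL l).integrable_sq

protected lemma DReg.lap (hf : DReg hh f) : DReg hh (lap f) :=
  DReg.sum fun k _ => (hf.pd k).pd k

lemma L2sq_nonneg (hh : ℝ) (f : R3 → ℝ) : 0 ≤ L2sq hh f :=
  integral_nonneg fun _ => sq_nonneg _

lemma neg_two_mul_integral_mul_le {α : Type*} [MeasurableSpace α] {μ : Measure α} {f g : α → ℝ}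
    (hf : MemLp f 2 μ) (hg : MemLp g 2 μ) {ε : ℝ} (hε : 0 < ε) :
    -(2 * ∫ x, f x * g x ∂μ) ≤ ε * ∫ x, f x ^ 2 ∂μ + ε⁻¹ * ∫ x, g x ^ 2 ∂μ := by
  have hf2 := hf.integrable_sq.const_mul ε
  have hg2 := hg.integrable_sq.const_mul ε⁻¹
  rw [← integral_const_mul, ← integral_const_mul, ← integral_const_mul, ← integral_neg,
    ← integral_add hf2 hg2]
  refine integral_mono ((hf.integrable_mul hg).const_mul 2).neg (hf2.add hg2) fun x => ?_
  have hsq : ε * f x ^ 2 + ε⁻¹ * g x ^ 2 + 2 * (f x * g x) = ε * (f x + ε⁻¹ * g x) ^ 2 := by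
    field_simp
    ring
  have : 0 ≤ ε * (f x + ε⁻¹ * g x) ^ 2 := by positivity
  linarith

end SquareIntegrable

section VerticalSlices

variable {hh : ℝ} {f : R3 → ℝ}

/-- The point of `ℝ³` with horizontal part `y` and height `t`; for fixed `y`, a parametrization
of the vertical line over `y`. -/
def vertLine (y : Fin 2 → ℝ) (t : ℝ) : R3 := (2 : Fin 3).insertNth (α := fun _ => ℝ) t y

@[simp]
lemma vertLine_apply_two (y : Fin 2 → ℝ) (t : ℝ) : vertLine y t 2 = t :=
  Fin.insertNth_apply_same ..

lemma hasDerivAt_vertLine (y : Fin 2 → ℝ) (t : ℝ) : HasDerivAt (vertLine y) (unitv 2) t := by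
  refine hasDerivAt_pi.2 fun j => ?_
  rcases eq_or_ne j 2 with rfl | hj
  · simpa [unitv] using hasDerivAt_id' t
  · obtain ⟨k, rfl⟩ := Fin.exists_succAbove_eq hj
    simpa [vertLine, unitv] using hasDerivAt_const t (y k)

lemma hasDerivAt_comp_vertLine (hf : Differentiable ℝ f) (y : Fin 2 → ℝ) (t : ℝ) :
    HasDerivAt (fun s => f (vertLine y s)) (pd 2 f (vertLine y t)) t :=
  (hf _).hasFDerivAt.comp_hasDerivAt t (hasDerivAt_vertLine y t)

lemma continuous_vertLine (y : Fin 2 → ℝ) : Continuous (vertLine y) :=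
  continuous_iff_continuousAt.2 fun t => (hasDerivAt_vertLine y t).continuousAt

lemma measurableSet_slab (hh : ℝ) : MeasurableSet (slab hh) :=
  measurableSet_preimage (measurable_pi_apply 2) measurableSet_Ioo

lemma measurePreserving_vertLine (hh : ℝ) :
    MeasurePreserving (fun p : ℝ × (Fin 2 → ℝ) => vertLine p.2 p.1)
      ((volume.restrict (Ioo 0 hh)).prod volume) (volume.restrict (slab hh)) := by
  have hmp := ((volume_preserving_piFinSuccAbove (fun _ : Fin 3 => ℝ) 2).symm).restrict_preimage
    (measurableSet_slab hh)
  have hpre : (MeasurableEquiv.piFinSuccAbove (fun _ : Fin 3 => ℝ) 2).symm ⁻¹' slab hh =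
      Ioo 0 hh ×ˢ univ := by
    ext p
    simp [slab]
  rwa [hpre, Measure.volume_eq_prod, ← Measure.prod_restrict, Measure.restrict_univ] at hmp

lemma measurableEmbedding_vertLine :
    MeasurableEmbedding (fun p : ℝ × (Fin 2 → ℝ) => vertLine p.2 p.1) :=
  (MeasurableEquiv.piFinSuccAbove (fun _ : Fin 3 => ℝ) 2).symm.measurableEmbedding

lemma integrable_vertLine (hf : IntegrableOn f (slab hh)) :
    Integrable (fun p : ℝ × (Fin 2 → ℝ) => f (vertLine p.2 p.1))
      ((volume.restrict (Ioo 0 hh)).prod volume) :=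
  ((measurePreserving_vertLine hh).integrable_comp_emb measurableEmbedding_vertLine).2 hf

lemma integral_Ioo_vertLine (hhh : 0 ≤ hh) (y : Fin 2 → ℝ) :
    ∫ t in Ioo 0 hh, f (vertLine y t) = ∫ t in (0)..hh, f (vertLine y t) := by
  rw [intervalIntegral.integral_of_le hhh, integral_Ioc_eq_integral_Ioo]

lemma setIntegral_slab (hhh : 0 ≤ hh) (hf : IntegrableOn f (slab hh)) :
    ∫ x in slab hh, f x = ∫ y, ∫ t in (0)..hh, f (vertLine y t) := by
  rw [← (measurePreserving_vertLine hh).integral_comp measurableEmbedding_vertLine,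
    integral_prod_symm _ (integrable_vertLine hf)]
  simp only [integral_Ioo_vertLine hhh]

lemma integrable_intervalIntegral_vertLine (hhh : 0 ≤ hh) (hf : IntegrableOn f (slab hh)) :
    Integrable fun y => ∫ t in (0)..hh, f (vertLine y t) := by
  simpa only [integral_Ioo_vertLine hhh] using (integrable_vertLine hf).integral_prod_right

lemma setIntegral_slab_mono (hhh : 0 ≤ hh) {g : R3 → ℝ} (hf : IntegrableOn f (slab hh))
    (hg : IntegrableOn g (slab hh))
    (h : ∀ y, ∫ t in (0)..hh, f (vertLine y t) ≤ ∫ t in (0)..hh, g (vertLine y t)) :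
    ∫ x in slab hh, f x ≤ ∫ x in slab hh, g x := by
  rw [setIntegral_slab hhh hf, setIntegral_slab hhh hg]
  exact integral_mono (integrable_intervalIntegral_vertLine hhh hf)
    (integrable_intervalIntegral_vertLine hhh hg) h

lemma L2sq_le_L2sq_pd_two (hhh : 0 ≤ hh) (hf : DReg hh f) (h0 : ∀ x, x 2 = 0 → f x = 0) :
    L2sq hh f ≤ 4 * hh ^ 2 * L2sq hh (pd 2 f) := by
  rw [L2sq, L2sq, ← integral_const_mul]
  refine setIntegral_slab_mono hhh hf.integrableOn_sq
    ((hf.pd 2).integrableOn_sq.const_mul _) fun y => ?_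
  rw [intervalIntegral.integral_const_mul]
  simpa using intervalIntegral_sq_le_of_eq_zero_left hhh
    (fun t _ => hasDerivAt_comp_vertLine hf.differentiable y t)
    ((hf.pd 2).1.continuous.comp (continuous_vertLine y)).continuousOn (h0 _ (by simp))

lemma L2sq_pd_two_le (hhh : 0 < hh) (hf : DReg hh f) :
    L2sq hh (pd 2 f) ≤ interpolationConst hh * (L2sq hh f + L2sq hh (pd 2 (pd 2 f))) := by
  have hf'' := (hf.pd 2).pd 2
  rw [L2sq, L2sq, L2sq, ← integral_add hf.integrableOn_sq hf''.integrableOn_sq,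
    ← integral_const_mul]
  refine setIntegral_slab_mono hhh.le (hf.pd 2).integrableOn_sq
    ((hf.integrableOn_sq.add hf''.integrableOn_sq).const_mul _) fun y => ?_
  rw [intervalIntegral.integral_const_mul]
  simpa using intervalIntegral_deriv_sq_le hhh
    (fun t _ => hasDerivAt_comp_vertLine hf.differentiable y t)
    (fun t _ => hasDerivAt_comp_vertLine (hf.pd 2).differentiable y t)
    (hf''.1.continuous.comp (continuous_vertLine y)).continuousOn

end VerticalSlices

section SlabIntegrationByParts

variable {hh : ℝ} {f g : R3 → ℝ}

lemma setIntegral_slab_mul_pd_horizontal {i : Fin 3} (hi : i ≠ 2) (hf : DReg hh f)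
    (hg : DReg hh g) :
    ∫ x in slab hh, f x * pd i g x = -∫ x in slab hh, pd i f x * g x :=
  setIntegral_mul_fderiv_eq_neg_fderiv_mul (measurableSet_slab hh)
    (fun x t => by simp [slab, unitv, hi.symm]) hf.differentiable hg.differentiable
    ((hf.pd i).integrableOn_mul hg) (hf.integrableOn_mul (hg.pd i)) (hf.integrableOn_mul hg)

lemma setIntegral_slab_mul_pd_two (hhh : 0 ≤ hh) (hf : DReg hh f) (hg : DReg hh g)
    (hfg : ∀ x ∈ bdry hh, f x * g x = 0) :
    ∫ x in slab hh, f x * pd 2 g x = -∫ x in slab hh, pd 2 f x * g x := by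
  have hcont {u : R3 → ℝ} (hu : DReg hh u) (y : Fin 2 → ℝ) :
      IntervalIntegrable (fun t => pd 2 u (vertLine y t)) volume 0 hh :=
    ((hu.pd 2).1.continuous.comp (continuous_vertLine y)).intervalIntegrable 0 hh
  rw [setIntegral_slab hhh (hf.integrableOn_mul (hg.pd 2)),
    setIntegral_slab hhh ((hf.pd 2).integrableOn_mul hg), ← integral_neg]
  refine integral_congr_ae (Eventually.of_forall fun y => ?_)
  have hbot : f (vertLine y 0) * g (vertLine y 0) = 0 := hfg _ (Or.inl (by simp))
  have htop : f (vertLine y hh) * g (vertLine y hh) = 0 := hfg _ (Or.inr (by simp))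
  simpa [hbot, htop] using intervalIntegral.integral_mul_deriv_eq_deriv_mul
    (fun t _ => hasDerivAt_comp_vertLine hf.differentiable y t)
    (fun t _ => hasDerivAt_comp_vertLine hg.differentiable y t) (hcont hf y) (hcont hg y)

lemma setIntegral_slab_mul_pd (hhh : 0 ≤ hh) (hf : DReg hh f) (hg : DReg hh g) (i : Fin 3)
    (hfg : i = 2 → ∀ x ∈ bdry hh, f x * g x = 0) :
    ∫ x in slab hh, f x * pd i g x = -∫ x in slab hh, pd i f x * g x := by
  rcases eq_or_ne i 2 with rfl | hi
  · exact setIntegral_slab_mul_pd_two hhh hf hg (hfg rfl)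
  · exact setIntegral_slab_mul_pd_horizontal hi hf hg

end SlabIntegrationByParts

section BoundaryConditions

variable {hh : ℝ} {f : R3 → ℝ}

/-- On each of the two faces of the slab, `f` satisfies the homogeneous Dirichlet or the
homogeneous Neumann condition, possibly a different one on each face. -/
def DirichletOrNeumann (hh : ℝ) (f : R3 → ℝ) : Prop :=
  ∀ c ∈ ({0, hh} : Set ℝ), (∀ x, x 2 = c → f x = 0) ∨ (∀ x, x 2 = c → pd 2 f x = 0)

lemma mem_bdry {x : R3} : x ∈ bdry hh ↔ x 2 ∈ ({0, hh} : Set ℝ) := Iff.rfl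

lemma dirichletOrNeumann_of_eq_zero (h0 : ∀ x ∈ bdry hh, f x = 0) : DirichletOrNeumann hh f :=
  fun _ hc => Or.inl fun x hx => h0 x (mem_bdry.2 (hx ▸ hc))

lemma dirichletOrNeumann_of_pd_eq_zero (h0 : ∀ x ∈ bdry hh, pd 2 f x = 0) :
    DirichletOrNeumann hh f :=
  fun _ hc => Or.inr fun x hx => h0 x (mem_bdry.2 (hx ▸ hc))

lemma dirichletOrNeumann_of_navier {u : R3 → Fin 3 → ℝ}
    (hu : ∀ x ∈ bdry hh,
      u x 2 = 0 ∧ pd 2 (fun y => u y 0) x = 0 ∧ pd 2 (fun y => u y 1) x = 0) (j : Fin 3) :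
    DirichletOrNeumann hh fun x => u x j := by
  fin_cases j
  · exact dirichletOrNeumann_of_pd_eq_zero fun x hx => (hu x hx).2.1
  · exact dirichletOrNeumann_of_pd_eq_zero fun x hx => (hu x hx).2.2
  · exact dirichletOrNeumann_of_eq_zero fun x hx => (hu x hx).1

lemma DirichletOrNeumann.mul_pd_two_eq_zero (hf : DirichletOrNeumann hh f) :
    ∀ x ∈ bdry hh, f x * pd 2 f x = 0 := fun x hx =>
  mul_eq_zero.2 ((hf (x 2) hx).imp (fun h => h x rfl) fun h => h x rfl)

lemma pd_eq_zero_of_height {c : ℝ} {i : Fin 3} (hi : i ≠ 2) (hf : Differentiable ℝ f)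
    (h0 : ∀ x, x 2 = c → f x = 0) : ∀ x, x 2 = c → pd i f x = 0 :=
  pd_eq_zero_of_forall_mem_eq_zero (S := {x | x 2 = c})
    (fun x hx t => (add_smul_unitv_apply_two hi x t).trans hx) hf h0

lemma pd_eq_zero_on_bdry {i : Fin 3} (hi : i ≠ 2) (hf : Differentiable ℝ f)
    (h0 : ∀ x ∈ bdry hh, f x = 0) : ∀ x ∈ bdry hh, pd i f x = 0 := fun x hx =>
  pd_eq_zero_of_height (c := x 2) hi hf (fun y hy => h0 y (mem_bdry.2 (hy ▸ hx))) x rfl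

protected lemma DirichletOrNeumann.pd (hb : DirichletOrNeumann hh f) (hf : DReg hh f)
    {i : Fin 3} (hi : i ≠ 2) : DirichletOrNeumann hh (pd i f) := fun c hc =>
  (hb c hc).imp (pd_eq_zero_of_height hi hf.differentiable) fun h => by
    rw [pd_comm hf.contDiff]
    exact pd_eq_zero_of_height hi (hf.pd 2).differentiable h

lemma lap_eq_zero_on_bdry (hf : DReg hh f) (h0 : ∀ x ∈ bdry hh, f x = 0)
    (h2 : ∀ x ∈ bdry hh, pd 2 (pd 2 f) x = 0) : ∀ x ∈ bdry hh, lap f x = 0 := by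
  refine fun x hx => Finset.sum_eq_zero fun i _ => ?_
  rcases eq_or_ne i 2 with rfl | hi
  · exact h2 x hx
  · exact pd_eq_zero_on_bdry hi (hf.pd i).differentiable
      (pd_eq_zero_on_bdry hi hf.differentiable h0) x hx

end BoundaryConditions

section EnergyIdentities

variable {hh : ℝ} {f : R3 → ℝ}

lemma setIntegral_pd_pd_mul_pd_pd_of_ne_two (hhh : 0 ≤ hh) (hf : DReg hh f)
    (hb : DirichletOrNeumann hh f) {i : Fin 3} (hi : i ≠ 2) (j : Fin 3) :
    ∫ x in slab hh, pd i (pd i f) x * pd j (pd j f) x = L2sq hh (pd j (pd i f)) := by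
  have hcomm : pd i (pd j (pd j f)) = pd j (pd j (pd i f)) := by
    rw [pd_comm (hf.pd j).contDiff, pd_comm hf.contDiff]
  have hbj : j = 2 → ∀ x ∈ bdry hh, pd i f x * pd j (pd i f) x = 0 := by
    rintro rfl
    exact (hb.pd hf hi).mul_pd_two_eq_zero
  calc ∫ x in slab hh, pd i (pd i f) x * pd j (pd j f) x
      = -∫ x in slab hh, pd i f x * pd j (pd j (pd i f)) x := by
        rw [← hcomm, setIntegral_slab_mul_pd_horizontal hi (hf.pd i) ((hf.pd j).pd j), neg_neg]
    _ = L2sq hh (pd j (pd i f)) := by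
        rw [setIntegral_slab_mul_pd hhh (hf.pd i) ((hf.pd i).pd j) j hbj, neg_neg]
        simp only [L2sq, sq]

lemma setIntegral_pd_pd_mul_pd_pd (hhh : 0 ≤ hh) (hf : DReg hh f)
    (hb : DirichletOrNeumann hh f) (i j : Fin 3) :
    ∫ x in slab hh, pd i (pd i f) x * pd j (pd j f) x = L2sq hh (pd j (pd i f)) := by
  rcases ne_or_eq i 2 with hi | rfl
  · exact setIntegral_pd_pd_mul_pd_pd_of_ne_two hhh hf hb hi j
  rcases ne_or_eq j 2 with hj | rfl
  · simp_rw [mul_comm (pd 2 (pd 2 f) _), pd_comm hf.contDiff j]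
    exact setIntegral_pd_pd_mul_pd_pd_of_ne_two hhh hf hb hj 2
  · simp only [L2sq, sq]

lemma sum_L2sq_pd_pd (hhh : 0 ≤ hh) (hf : DReg hh f) (hb : DirichletOrNeumann hh f) :
    ∑ i, ∑ j, L2sq hh (pd j (pd i f)) = L2sq hh (lap f) := by
  have hint (i j : Fin 3) :
      IntegrableOn (fun x => pd i (pd i f) x * pd j (pd j f) x) (slab hh) :=
    ((hf.pd i).pd i).integrableOn_mul ((hf.pd j).pd j)
  simp only [← setIntegral_pd_pd_mul_pd_pd hhh hf hb]
  simp only [L2sq, lap, sq, Finset.sum_mul_sum]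
  rw [integral_finsetSum _ fun i _ => integrable_finsetSum _ fun j _ => hint i j]
  exact Finset.sum_congr rfl fun i _ => (integral_finsetSum _ fun j _ => hint i j).symm

lemma sum_L2sq_pd (hhh : 0 ≤ hh) (hf : DReg hh f) (hb : DirichletOrNeumann hh f) :
    ∑ i, L2sq hh (pd i f) = -∫ x in slab hh, f x * lap f x := by
  have hpd (i : Fin 3) : L2sq hh (pd i f) = -∫ x in slab hh, f x * pd i (pd i f) x := by
    have hbi : i = 2 → ∀ x ∈ bdry hh, f x * pd i f x = 0 := by
      rintro rfl
      exact hb.mul_pd_two_eq_zero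
    rw [setIntegral_slab_mul_pd hhh hf (hf.pd i) i hbi, neg_neg]
    simp only [L2sq, sq]
  simp only [hpd, Finset.sum_neg_distrib, lap, Finset.mul_sum]
  rw [integral_finsetSum _ fun i _ => hf.integrableOn_mul ((hf.pd i).pd i)]

lemma sum_L2sq_pd_le (hhh : 0 ≤ hh) (hf : DReg hh f) (hb : DirichletOrNeumann hh f) {ε : ℝ}
    (hε : 0 < ε) :
    2 * ∑ i, L2sq hh (pd i f) ≤ ε * L2sq hh f + ε⁻¹ * L2sq hh (lap f) := by
  rw [sum_L2sq_pd hhh hf hb, mul_neg]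
  exact neg_two_mul_integral_mul_le hf.memLp hf.lap.memLp hε

end EnergyIdentities

section SobolevNorms

variable {hh : ℝ}

lemma HSq_zero (hh : ℝ) (f : R3 → ℝ) : HSq hh 0 f = L2sq hh f := by
  simp [HSq, pdL]

lemma HSq_succ (hh : ℝ) (k : ℕ) (f : R3 → ℝ) :
    HSq hh (k + 1) f = L2sq hh f + ∑ i, HSq hh k (pd i f) := by
  have hstep (n : ℕ) : ∑ α : Fin (n + 1) → Fin 3, L2sq hh (pdL (List.ofFn α) f) =
      ∑ i, ∑ β : Fin n → Fin 3, L2sq hh (pdL (List.ofFn β) (pd i f)) := by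
    rw [← (Fin.snocEquiv fun _ : Fin (n + 1) => Fin 3).sum_comp, Fintype.sum_prod_type]
    refine Finset.sum_congr rfl fun i _ => Finset.sum_congr rfl fun β _ => ?_
    rw [pdL_pd, List.ofFn_succ']
    simp [Fin.snocEquiv]
  rw [HSq, Finset.sum_range_succ', add_comm]
  simp only [hstep]
  rw [Finset.sum_comm]
  simp [HSq, pdL]

lemma HSq_two (hh : ℝ) (f : R3 → ℝ) :
    HSq hh 2 f =
      L2sq hh f + ∑ i, L2sq hh (pd i f) + ∑ i, ∑ j, L2sq hh (pd j (pd i f)) := by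
  simp only [HSq_succ, HSq_zero, Finset.sum_add_distrib, add_assoc]

lemma HSq_nonneg (hh : ℝ) (k : ℕ) (f : R3 → ℝ) : 0 ≤ HSq hh k f :=
  Finset.sum_nonneg fun _ _ => Finset.sum_nonneg fun _ _ => L2sq_nonneg _ _

lemma HSq_pd_le (hh : ℝ) (k : ℕ) (i : Fin 3) (f : R3 → ℝ) :
    HSq hh k (pd i f) ≤ HSq hh (k + 1) f := by
  rw [HSq_succ]
  have := Finset.single_le_sum (f := fun i => HSq hh k (pd i f))
    (fun i _ => HSq_nonneg hh k (pd i f)) (Finset.mem_univ i)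
  linarith [L2sq_nonneg hh f]

lemma L2sq_pd_le_HSq_one (hh : ℝ) (i : Fin 3) (f : R3 → ℝ) : L2sq hh (pd i f) ≤ HSq hh 1 f :=
  HSq_zero hh (pd i f) ▸ HSq_pd_le hh 0 i f

end SobolevNorms

section EllipticEstimates

variable {hh : ℝ} {f : R3 → ℝ}

lemma DirichletOrNeumann.HSq_two_le (hb : DirichletOrNeumann hh f) (hhh : 0 ≤ hh)
    (hf : DReg hh f) : HSq hh 2 f ≤ 2 * (L2sq hh f + L2sq hh (lap f)) := by
  rw [HSq_two, sum_L2sq_pd_pd hhh hf hb]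
  linarith [sum_L2sq_pd_le hhh hf hb one_pos, L2sq_nonneg hh f, L2sq_nonneg hh (lap f)]

lemma L2sq_le_L2sq_lap (hhh : 0 < hh) (hf : DReg hh f) (h0 : ∀ x ∈ bdry hh, f x = 0) :
    L2sq hh f ≤ 16 * hh ^ 4 * L2sq hh (lap f) := by
  have hpoincare := L2sq_le_L2sq_pd_two hhh.le hf fun x hx => h0 x (Or.inl hx)
  have hvert : L2sq hh (pd 2 f) ≤ ∑ i, L2sq hh (pd i f) :=
    Finset.single_le_sum (f := fun i => L2sq hh (pd i f)) (fun i _ => L2sq_nonneg hh (pd i f))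
      (Finset.mem_univ 2)
  have hε : 0 < (4 * hh ^ 2)⁻¹ := by positivity
  have henergy := sum_L2sq_pd_le hhh.le hf (dirichletOrNeumann_of_eq_zero h0) hε
  have : 2 * L2sq hh f ≤ L2sq hh f + 16 * hh ^ 4 * L2sq hh (lap f) :=
    calc 2 * L2sq hh f ≤ 4 * hh ^ 2 * (2 * ∑ i, L2sq hh (pd i f)) := by
          nlinarith [mul_le_mul_of_nonneg_left hvert (by positivity : 0 ≤ 4 * hh ^ 2)]
      _ ≤ 4 * hh ^ 2 * ((4 * hh ^ 2)⁻¹ * L2sq hh f + (4 * hh ^ 2)⁻¹⁻¹ * L2sq hh (lap f)) := by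
          gcongr
      _ = L2sq hh f + 16 * hh ^ 4 * L2sq hh (lap f) := by
          field_simp
          ring
  linarith

lemma HSq_two_le_L2sq_lap (hhh : 0 < hh) (hf : DReg hh f) (h0 : ∀ x ∈ bdry hh, f x = 0) :
    HSq hh 2 f ≤ (2 + 32 * hh ^ 4) * L2sq hh (lap f) := by
  linarith [(dirichletOrNeumann_of_eq_zero h0).HSq_two_le hhh.le hf, L2sq_le_L2sq_lap hhh hf h0]

lemma HSq_three_le (hhh : 0 < hh) (hf : DReg hh f) (h0 : ∀ x ∈ bdry hh, f x = 0)
    (h2 : ∀ x ∈ bdry hh, pd 2 (pd 2 f) x = 0) :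
    HSq hh 3 f ≤ (2 + 8 * hh ^ 2 * (2 + 32 * hh ^ 4)) * ∑ i, L2sq hh (pd i (lap f)) := by
  have hpd_bc (i : Fin 3) : DirichletOrNeumann hh (pd i f) := by
    rcases eq_or_ne i 2 with rfl | hi
    · exact dirichletOrNeumann_of_pd_eq_zero h2
    · exact (dirichletOrNeumann_of_eq_zero h0).pd hf hi
  have htop : ∑ i, HSq hh 2 (pd i f) ≤
      2 * (∑ i, L2sq hh (pd i f) + ∑ i, L2sq hh (pd i (lap f))) := by
    rw [← Finset.sum_add_distrib, Finset.mul_sum]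
    exact Finset.sum_le_sum fun i _ =>
      pd_lap hf.1 i ▸ (hpd_bc i).HSq_two_le hhh.le (hf.pd i)
  have hlow : L2sq hh f + ∑ i, L2sq hh (pd i f) ≤ HSq hh 2 f := by
    rw [HSq_two]
    exact le_add_of_nonneg_right
      (Finset.sum_nonneg fun i _ => Finset.sum_nonneg fun j _ => L2sq_nonneg hh _)
  have hpoincare : L2sq hh (lap f) ≤ 4 * hh ^ 2 * ∑ i, L2sq hh (pd i (lap f)) :=
    (L2sq_le_L2sq_pd_two hhh.le hf.lap fun x hx =>
      lap_eq_zero_on_bdry hf h0 h2 x (Or.inl hx)).trans <| by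
        gcongr
        exact Finset.single_le_sum (f := fun i => L2sq hh (pd i (lap f)))
          (fun i _ => L2sq_nonneg hh (pd i (lap f))) (Finset.mem_univ 2)
  have hM : 0 ≤ 2 + 32 * hh ^ 4 := by positivity
  rw [HSq_succ]
  linarith [HSq_two_le_L2sq_lap hhh hf h0, L2sq_nonneg hh f,
    mul_le_mul_of_nonneg_left hpoincare hM]

lemma L2sq_pd_two_pd_two_le (hf : DReg hh f) :
    L2sq hh (pd 2 (pd 2 f)) ≤
      3 * (L2sq hh (lap f) + L2sq hh (pd 0 (pd 0 f)) + L2sq hh (pd 1 (pd 1 f))) := by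
  have hsq (i : Fin 3) := ((hf.pd i).pd i).integrableOn_sq
  have hsum : IntegrableOn (fun x => lap f x ^ 2 + pd 0 (pd 0 f) x ^ 2) (slab hh) :=
    hf.lap.integrableOn_sq.add (hsq 0)
  simp only [L2sq]
  rw [← integral_add hf.lap.integrableOn_sq (hsq 0), ← integral_add hsum (hsq 1),
    ← integral_const_mul]
  refine integral_mono (hsq 2) ((hsum.add (hsq 1)).const_mul 3) fun x => ?_
  have hlap : pd 2 (pd 2 f) x = lap f x - pd 0 (pd 0 f) x - pd 1 (pd 1 f) x := by
    simp only [lap, Fin.sum_univ_three]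
    ring
  simp only [hlap]
  linarith [sq_nonneg (lap f x + pd 0 (pd 0 f) x), sq_nonneg (lap f x + pd 1 (pd 1 f) x),
    sq_nonneg (pd 0 (pd 0 f) x - pd 1 (pd 1 f) x)]

lemma HSq_two_le_of_horizontal (hhh : 0 < hh) (hf : DReg hh f) :
    HSq hh 2 f ≤ (5 + 3 * interpolationConst hh) *
      (L2sq hh f + L2sq hh (lap f) + HSq hh 1 (pd 0 f) + HSq hh 1 (pd 1 f)) := by
  have hK := interpolationConst_pos hh
  have hinterp := L2sq_pd_two_le hhh hf
  have hlap := L2sq_pd_two_pd_two_le hf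
  have h02 := L2sq_pd_le_HSq_one hh 2 (pd 0 f)
  have h12 := L2sq_pd_le_HSq_one hh 2 (pd 1 f)
  have h00 := L2sq_pd_le_HSq_one hh 0 (pd 0 f)
  have h11 := L2sq_pd_le_HSq_one hh 1 (pd 1 f)
  have hvert : HSq hh 1 (pd 2 f) = L2sq hh (pd 2 f) +
      (L2sq hh (pd 2 (pd 0 f)) + L2sq hh (pd 2 (pd 1 f)) + L2sq hh (pd 2 (pd 2 f))) := by
    simp only [HSq_succ, HSq_zero, Fin.sum_univ_three, pd_comm hf.contDiff _ 2]
  have hsecond : L2sq hh (pd 2 (pd 2 f)) ≤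
      3 * (L2sq hh (lap f) + HSq hh 1 (pd 0 f) + HSq hh 1 (pd 1 f)) := by linarith
  rw [HSq_succ, Fin.sum_univ_three, hvert]
  nlinarith [mul_le_mul_of_nonneg_left hsecond hK.le, mul_nonneg hK.le (L2sq_nonneg hh f),
    L2sq_nonneg hh f, L2sq_nonneg hh (lap f), HSq_nonneg hh 1 (pd 0 f), HSq_nonneg hh 1 (pd 1 f)]

lemma DirichletOrNeumann.sum_HSq_two_pd_le (hb : DirichletOrNeumann hh f) (hhh : 0 < hh)
    (hf : DReg hh f) :
    ∑ i, HSq hh 2 (pd i f) ≤ (12 + 6 * interpolationConst hh) *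
      (∑ i, L2sq hh (pd i f) + ∑ i, L2sq hh (lap (pd i f))) := by
  have hK := interpolationConst_pos hh
  have hhor {i : Fin 3} (hi : i ≠ 2) := (hb.pd hf hi).HSq_two_le hhh.le (hf.pd i)
  have hvert := HSq_two_le_of_horizontal hhh (hf.pd 2)
  have hle (i : Fin 3) : HSq hh 1 (pd i (pd 2 f)) ≤ HSq hh 2 (pd i f) := by
    rw [pd_comm hf.contDiff]
    exact HSq_pd_le hh 1 2 (pd i f)
  have h0 := hhor (i := 0) (by decide)
  have h1 := hhor (i := 1) (by decide)
  have hsum : L2sq hh (pd 2 f) + L2sq hh (lap (pd 2 f)) + HSq hh 1 (pd 0 (pd 2 f)) +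
      HSq hh 1 (pd 1 (pd 2 f)) ≤ 2 * (∑ i, L2sq hh (pd i f) + ∑ i, L2sq hh (lap (pd i f))) := by
    simp only [Fin.sum_univ_three]
    linarith [hle 0, hle 1, L2sq_nonneg hh (pd 2 f), L2sq_nonneg hh (lap (pd 2 f))]
  have hvert_le := hvert.trans (mul_le_mul_of_nonneg_left hsum (by positivity))
  simp only [Fin.sum_univ_three] at hvert_le ⊢
  linarith [L2sq_nonneg hh (pd 2 f), L2sq_nonneg hh (lap (pd 2 f))]

end EllipticEstimates

section TimeDerivative

variable {hh : ℝ} {g : ℝ → R3 → ℝ}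

lemma uncurry_dt (hg : Differentiable ℝ (Function.uncurry g)) :
    Function.uncurry (dt g) = fun p => fderiv ℝ (Function.uncurry g) p (1, 0) := by
  funext ⟨t, x⟩
  exact ((hg (t, x)).hasFDerivAt.comp_hasDerivAt t
    ((hasDerivAt_id t).prodMk (hasDerivAt_const t x))).deriv

lemma uncurry_pd (hg : Differentiable ℝ (Function.uncurry g)) (i : Fin 3) :
    Function.uncurry (fun t => pd i (g t)) =
      fun p => fderiv ℝ (Function.uncurry g) p (0, unitv i) := by
  funext ⟨t, x⟩
  have hcomp : HasFDerivAt (g t) _ x :=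
    (hg (t, x)).hasFDerivAt.comp x (hasFDerivAt_prodMk_right t x)
  simp [pd, hcomp.fderiv]

lemma contDiff_uncurry_dt (hg : ContDiff ℝ (⊤ : ℕ∞) (Function.uncurry g)) :
    ContDiff ℝ (⊤ : ℕ∞) (Function.uncurry (dt g)) := by
  rw [uncurry_dt (hg.differentiable (by simp))]
  exact (hg.fderiv_right (m := (⊤ : ℕ∞)) (by simp)).clm_apply contDiff_const

lemma contDiff_uncurry_pd (hg : ContDiff ℝ (⊤ : ℕ∞) (Function.uncurry g)) (i : Fin 3) :
    ContDiff ℝ (⊤ : ℕ∞) (Function.uncurry fun t => pd i (g t)) := by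
  rw [uncurry_pd (hg.differentiable (by simp))]
  exact (hg.fderiv_right (m := (⊤ : ℕ∞)) (by simp)).clm_apply contDiff_const

lemma dt_pd (hg : ContDiff ℝ (⊤ : ℕ∞) (Function.uncurry g)) (i : Fin 3) :
    dt (fun t => pd i (g t)) = fun t => pd i (dt g t) := by
  have hd := hg.differentiable (by simp)
  funext t x
  calc dt (fun s => pd i (g s)) t x
      = fderiv ℝ (fun p => fderiv ℝ (Function.uncurry g) p (0, unitv i)) (t, x) (1, 0) := by
        rw [← uncurry_pd hd i]
        exact congrFun (uncurry_dt ((contDiff_uncurry_pd hg i).differentiable (by simp))) (t, x)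
    _ = fderiv ℝ (fun p => fderiv ℝ (Function.uncurry g) p (1, 0)) (t, x) (0, unitv i) :=
        fderiv_fderiv_apply_comm (contDiff_infty.1 hg 2) _ _ _
    _ = pd i (dt g t) x := by
        rw [← uncurry_dt hd]
        exact (congrFun
          (uncurry_pd ((contDiff_uncurry_dt hg).differentiable (by simp)) i) (t, x)).symm

lemma dt_lap (hg : ContDiff ℝ (⊤ : ℕ∞) (Function.uncurry g)) (t : ℝ) :
    dt (fun s => lap (g s)) t = lap (dt g t) := by
  have hpd (i : Fin 3) := contDiff_uncurry_pd (contDiff_uncurry_pd hg i) i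
  have hcomm (i : Fin 3) (x : R3) :
      deriv (fun s => pd i (pd i (g s)) x) t = pd i (pd i (dt g t)) x := by
    have h := dt_pd (contDiff_uncurry_pd hg i) i
    rw [dt_pd hg i] at h
    exact congrFun (congrFun h t) x
  have hdiff (i : Fin 3) (x : R3) : DifferentiableAt ℝ (fun s => pd i (pd i (g s)) x) t :=
    ((hpd i).comp (contDiff_prodMk_left x)).differentiable (by simp) t
  funext x
  simp only [dt, lap, deriv_fun_sum fun i _ => hdiff i x, hcomm]

protected lemma SReg.dt (hg : SReg hh g) (t : ℝ) : DReg hh (dt g t) :=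
  ⟨(contDiff_uncurry_dt hg.1).comp (contDiff_prodMk_right t), fun l => (hg.2 t l).2⟩

lemma dt_eq_zero_on_bdry (h0 : ∀ t, ∀ x ∈ bdry hh, g t x = 0) (t : ℝ) :
    ∀ x ∈ bdry hh, dt g t x = 0 := fun x hx => by
  simp [dt, h0 _ x hx]

end TimeDerivative

section NormEstimates

variable {hh : ℝ} {f : R3 → ℝ}

lemma sqrt_le_sqrt_mul_add_sqrt {a b c d : ℝ} (hb : 0 ≤ b) (hc : 0 ≤ c) (hd : 0 ≤ d)
    (h : a ≤ c * (b + d)) : √a ≤ √c * (√b + √d) := by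
  have hadd : √(b + d) ≤ √b + √d := by
    rw [Real.sqrt_le_left (by positivity), add_sq, Real.sq_sqrt hb, Real.sq_sqrt hd]
    linarith [mul_nonneg (Real.sqrt_nonneg b) (Real.sqrt_nonneg d)]
  calc √a ≤ √(c * (b + d)) := Real.sqrt_le_sqrt h
    _ = √c * √(b + d) := Real.sqrt_mul hc _
    _ ≤ √c * (√b + √d) := by gcongr

lemma sqrt_le_sqrt_mul_sqrt {a b c : ℝ} (hc : 0 ≤ c) (h : a ≤ c * b) : √a ≤ √c * √b :=
  (Real.sqrt_le_sqrt h).trans_eq (Real.sqrt_mul hc b)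

lemma VHnorm_two_le (hhh : 0 ≤ hh) {u : R3 → Fin 3 → ℝ} (hu : ∀ j, DReg hh fun x => u x j)
    (hb : ∀ j, DirichletOrNeumann hh fun x => u x j) :
    VHnorm hh 2 u ≤ √2 * (√(∑ j, L2sq hh fun x => u x j) +
      √(∑ j, L2sq hh (lap fun x => u x j))) := by
  refine sqrt_le_sqrt_mul_add_sqrt (Finset.sum_nonneg fun j _ => L2sq_nonneg hh _) zero_le_two
    (Finset.sum_nonneg fun j _ => L2sq_nonneg hh _) ?_
  rw [VHSq, ← Finset.sum_add_distrib, Finset.mul_sum]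
  exact Finset.sum_le_sum fun j _ => (hb j).HSq_two_le hhh (hu j)

lemma GradNorm_two_le (hhh : 0 < hh) {u : R3 → Fin 3 → ℝ} (hu : ∀ j, DReg hh fun x => u x j)
    (hb : ∀ j, DirichletOrNeumann hh fun x => u x j) :
    GradNorm hh 2 u ≤ √(12 + 6 * interpolationConst hh) *
      (√(∑ i, ∑ j, L2sq hh (pd i fun x => u x j)) +
        √(∑ i, ∑ j, L2sq hh (lap (pd i fun x => u x j)))) := by
  have hK := interpolationConst_pos hh
  refine sqrt_le_sqrt_mul_add_sqrt
    (Finset.sum_nonneg fun i _ => Finset.sum_nonneg fun j _ => L2sq_nonneg hh _) (by positivity)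
    (Finset.sum_nonneg fun i _ => Finset.sum_nonneg fun j _ => L2sq_nonneg hh _) ?_
  rw [GradSq, Finset.sum_comm, Finset.sum_comm (f := fun i j => L2sq hh (pd i _)),
    Finset.sum_comm (f := fun i j => L2sq hh (lap (pd i _))), ← Finset.sum_add_distrib,
    Finset.mul_sum]
  exact Finset.sum_le_sum fun j _ => (hb j).sum_HSq_two_pd_le hhh (hu j)

lemma Hnorm_two_le (hhh : 0 < hh) (hf : DReg hh f) (h0 : ∀ x ∈ bdry hh, f x = 0) :
    Hnorm hh 2 f ≤ √(2 + 32 * hh ^ 4) * √(L2sq hh (lap f)) :=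
  sqrt_le_sqrt_mul_sqrt (by positivity) (HSq_two_le_L2sq_lap hhh hf h0)

lemma Hnorm_two_pd_le (hhh : 0 < hh) (hf : DReg hh f) (h0 : ∀ x ∈ bdry hh, f x = 0)
    {s : Fin 3} (hs : s ≠ 2) :
    Hnorm hh 2 (pd s f) ≤ √(2 + 32 * hh ^ 4) * √(L2sq hh (pd s (lap f))) :=
  pd_lap hf.1 s ▸ Hnorm_two_le hhh (hf.pd s) (pd_eq_zero_on_bdry hs hf.differentiable h0)

lemma Hnorm_two_dt_le (hhh : 0 < hh) {g : ℝ → R3 → ℝ} (hg : SReg hh g)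
    (h0 : ∀ t, ∀ x ∈ bdry hh, g t x = 0) (t : ℝ) :
    Hnorm hh 2 (dt g t) ≤ √(2 + 32 * hh ^ 4) * √(L2sq hh (dt (fun s => lap (g s)) t)) :=
  dt_lap hg.1 t ▸ Hnorm_two_le hhh (hg.dt t) (dt_eq_zero_on_bdry h0 t)

lemma Hnorm_three_le (hhh : 0 < hh) (hf : DReg hh f) (h0 : ∀ x ∈ bdry hh, f x = 0)
    (h2 : ∀ x ∈ bdry hh, pd 2 (pd 2 f) x = 0) :
    Hnorm hh 3 f ≤
      √(2 + 8 * hh ^ 2 * (2 + 32 * hh ^ 4)) * √(∑ i, L2sq hh (pd i (lap f))) :=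
  sqrt_le_sqrt_mul_sqrt (by positivity) (HSq_three_le hhh hf h0 h2)

end NormEstimates

theorem elliptic_estimates_on_slab_general (hh : ℝ) (hhh : 0 < hh) :
    ∃ C : ℝ, 0 < C ∧
      (∀ u : R3 → Fin 3 → ℝ, (∀ j, DReg hh fun x => u x j) →
        (∀ j, DirichletOrNeumann hh fun x => u x j) →
        VHnorm hh 2 u ≤
          C * (√(∑ j, L2sq hh fun x => u x j) + √(∑ j, L2sq hh (lap fun x => u x j))) ∧
        GradNorm hh 2 u ≤
          C * (√(∑ i, ∑ j, L2sq hh (pd i fun x => u x j)) +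
            √(∑ i, ∑ j, L2sq hh (lap (pd i fun x => u x j))))) ∧
      (∀ f : R3 → ℝ, DReg hh f → (∀ x ∈ bdry hh, f x = 0) →
        ((∀ x ∈ bdry hh, pd 2 (pd 2 f) x = 0) →
          Hnorm hh 3 f ≤ C * √(∑ i, L2sq hh (pd i (lap f)))) ∧
        ∀ s ≠ 2, Hnorm hh 2 (pd s f) ≤ C * √(L2sq hh (pd s (lap f)))) ∧
      ∀ g : ℝ → R3 → ℝ, SReg hh g → (∀ t, ∀ x ∈ bdry hh, g t x = 0) →
        ∀ t, Hnorm hh 2 (dt g t) ≤ C * √(L2sq hh (dt (fun s => lap (g s)) t)) := by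
  set C₁ := √2
  set C₂ := √(12 + 6 * interpolationConst hh)
  set C₃ := √(2 + 8 * hh ^ 2 * (2 + 32 * hh ^ 4))
  set C₄ := √(2 + 32 * hh ^ 4)
  have hC₁ : 0 < C₁ := by positivity
  have hC₂ : 0 ≤ C₂ := Real.sqrt_nonneg _
  have hC₃ : 0 ≤ C₃ := Real.sqrt_nonneg _
  have hC₄ : 0 ≤ C₄ := Real.sqrt_nonneg _
  refine ⟨C₁ + C₂ + C₃ + C₄, by positivity,
    fun u hu hb => ⟨(VHnorm_two_le hhh.le hu hb).trans ?_, (GradNorm_two_le hhh hu hb).trans ?_⟩,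
    fun f hf h0 => ⟨fun h2 => (Hnorm_three_le hhh hf h0 h2).trans ?_,
      fun s hs => (Hnorm_two_pd_le hhh hf h0 hs).trans ?_⟩,
    fun g hg h0 t => (Hnorm_two_dt_le hhh hg h0 t).trans ?_⟩ <;>
  · gcongr
    linarith

/-- elliptic regularity estimates on the slab, Lemma 2.2 /
    Lemma A.9 of the appendix. -/
theorem elliptic_estimates_on_slab (hh : ℝ) (hhh : 0 < hh) :
    ∃ C : ℝ, 0 < C ∧
      -- (1) Navier boundary conditions, i = 0 and i = 1:
      ((∀ u : R3 → Fin 3 → ℝ,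
          (∀ j : Fin 3, DReg hh (fun x => u x j)) →
          (∀ x ∈ bdry hh,
            u x 2 = 0 ∧ pd 2 (fun y => u y 0) x = 0 ∧ pd 2 (fun y => u y 1) x = 0) →
          (VHnorm hh 2 u
              ≤ C * (Real.sqrt (∑ j : Fin 3, L2sq hh (fun x => u x j))
                  + Real.sqrt (∑ j : Fin 3, L2sq hh (lap (fun x => u x j)))) ∧
           GradNorm hh 2 u
              ≤ C * (Real.sqrt (∑ i : Fin 3, ∑ j : Fin 3,
                      L2sq hh (pd i (fun x => u x j)))
                  + Real.sqrt (∑ i : Fin 3, ∑ j : Fin 3,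
                      L2sq hh (lap (pd i (fun x => u x j))))))) ∧
      -- (2) Dirichlet-type boundary conditions for σ, s = 1, 2:
      (∀ f : R3 → ℝ, DReg hh f →
          (∀ x ∈ bdry hh, f x = 0 ∧ pd 2 (pd 2 f) x = 0) →
          Hnorm hh 3 f ≤ C * Real.sqrt (∑ i : Fin 3, L2sq hh (pd i (lap f))) ∧
          Hnorm hh 2 (pd 0 f) ≤ C * Real.sqrt (L2sq hh (pd 0 (lap f))) ∧
          Hnorm hh 2 (pd 1 f) ≤ C * Real.sqrt (L2sq hh (pd 1 (lap f)))) ∧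
      -- (2') the case s = t:
      (∀ g : ℝ → R3 → ℝ, SReg hh g →
          (∀ t : ℝ, ∀ x ∈ bdry hh, g t x = 0 ∧ pd 2 (pd 2 (g t)) x = 0) →
          ∀ t : ℝ,
            Hnorm hh 2 (dt g t)
              ≤ C * Real.sqrt (L2sq hh (dt (fun s => lap (g s)) t)))) := by
  obtain ⟨C, hC, hNavier, hDirichlet, hTime⟩ := elliptic_estimates_on_slab_general hh hhh
  refine ⟨C, hC, fun u hu hb => hNavier u hu (dirichletOrNeumann_of_navier hb), fun f hf hb => ?_,
    fun g hg hb => hTime g hg fun t x hx => (hb t x hx).1⟩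
  obtain ⟨hthree, htwo⟩ := hDirichlet f hf fun x hx => (hb x hx).1
  exact ⟨hthree fun x hx => (hb x hx).2, htwo 0 (by decide), htwo 1 (by decide)⟩
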